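/- Let ℓ > 0 and T > 0, let M, C : [0, ℓ] → ℝ^{6×6} be continuously differentiable with M(x) and C(x) symmetric positive definite for every x, let Υ_c : [0, ℓ] → ℝ³ be continuously differentiable, and let Φ̄, Ψ̄ : [0, ℓ] × [0, T] → ℝ³ be continuous. Let p : [0, ℓ] × [0, T] → ℝ³ and R : [0, ℓ] × [0, T] → ℝ^{3×3} be twice continuously differentiable with R(x,t)ᵀ R(x,t) = I₃ and det R(x,t) = 1 for all (x,t). Define v₁ = Rᵀ ∂ₜp, v₂ = vec(Rᵀ ∂ₜR), v = (v₁, v₂) ∈ ℝ⁶, s₁ = Rᵀ ∂ₓp − e₁, s₂ = vec(Rᵀ ∂ₓR) − Υ_c, s = (s₁, s₂) ∈ ℝ⁶, z = C^{-1} s with components z = (z₁, z₂) ∈ ℝ³ × ℝ³, and h = M v with components h = (h₁, h₂) ∈ ℝ³ × ℝ³. Then the following two statements are equivalent on (0, ℓ) × (0, T): (IGEB, first six equations) (M ∂ₜv)₁ − ∂ₓ z₁ − Υ_c × z₁ + v₂ × h₁ + z₁ × s₂ = Φ̄ and (M ∂ₜv)₂ − ∂ₓ z₂ − e₁ × z₁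 − Υ_c × z₂ + v₁ × h₁ + v₂ × h₂ + z₁ × s₁ + z₂ × s₂ = Ψ̄, where (M ∂ₜv)₁ and (M ∂ₜv)₂ are the first three and last three components of M ∂ₜv; (GEB) ∂ₜ(R h₁) = ∂ₓ(R z₁) + R Φ̄ and (∂ₜp) × (R h₁) + ∂ₜ(R h₂) = (∂ₓp) × (R z₁) + ∂ₓ(R z₂) + R Ψ̄. -/

import Mathlib

open Matrix

attribute [local instance] Matrix.normedAddCommGroup Matrix.normedSpace

/-- The cross product on `ℝ³`. -/
def cross (u v : Fin 3 → ℝ) : Fin 3 → ℝ :=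
  ![u 1 * v 2 - u 2 * v 1, u 2 * v 0 - u 0 * v 2, u 0 * v 1 - u 1 * v 0]

/-- `vec A = (A₃₂, A₁₃, A₂₁)`, so that `vec û = u` for the cross-product matrix `û`. -/
def vecOf (A : Matrix (Fin 3) (Fin 3) ℝ) : Fin 3 → ℝ := ![A 2 1, A 0 2, A 1 0]

/-- `e₁ = (1, 0, 0)`. -/
def e1v : Fin 3 → ℝ := ![1, 0, 0]

/-- Index type for `ℝ⁶` split into two blocks of `ℝ³`. -/
abbrev I6 := Fin 3 ⊕ Fin 3

/-- Linear velocity `v₁ = Rᵀ ∂ₜ p`. -/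
noncomputable def v1f (p : ℝ × ℝ → (Fin 3 → ℝ)) (R : ℝ × ℝ → Matrix (Fin 3) (Fin 3) ℝ) :
    ℝ × ℝ → (Fin 3 → ℝ) :=
  fun pt => (R pt)ᵀ *ᵥ fderiv ℝ p pt ((0 : ℝ), (1 : ℝ))

/-- Angular velocity `v₂ = vec(Rᵀ ∂ₜ R)`. -/
noncomputable def v2f (R : ℝ × ℝ → Matrix (Fin 3) (Fin 3) ℝ) : ℝ × ℝ → (Fin 3 → ℝ) :=
  fun pt => vecOf ((R pt)ᵀ * fderiv ℝ R pt ((0 : ℝ), (1 : ℝ)))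

/-- Velocity vector `v = (v₁, v₂) ∈ ℝ⁶`. -/
noncomputable def vf (p : ℝ × ℝ → (Fin 3 → ℝ)) (R : ℝ × ℝ → Matrix (Fin 3) (Fin 3) ℝ) :
    ℝ × ℝ → (I6 → ℝ) :=
  fun pt => Sum.elim (v1f p R pt) (v2f R pt)

/-- Linear strain `s₁ = Rᵀ ∂ₓ p − e₁`. -/
noncomputable def s1f (p : ℝ × ℝ → (Fin 3 → ℝ)) (R : ℝ × ℝ → Matrix (Fin 3) (Fin 3) ℝ) :
    ℝ × ℝ → (Fin 3 → ℝ) :=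
  fun pt => (R pt)ᵀ *ᵥ fderiv ℝ p pt ((1 : ℝ), (0 : ℝ)) - e1v

/-- Angular strain `s₂ = vec(Rᵀ ∂ₓ R) − Υ_c`. -/
noncomputable def s2f (R : ℝ × ℝ → Matrix (Fin 3) (Fin 3) ℝ) (Υc : ℝ → (Fin 3 → ℝ)) :
    ℝ × ℝ → (Fin 3 → ℝ) :=
  fun pt => vecOf ((R pt)ᵀ * fderiv ℝ R pt ((1 : ℝ), (0 : ℝ))) - Υc pt.1

/-- Internal forces and moments `z = C⁻¹ s ∈ ℝ⁶`. -/
noncomputable def zf (C : ℝ → Matrix I6 I6 ℝ) (Υc : ℝ → (Fin 3 → ℝ))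
    (p : ℝ × ℝ → (Fin 3 → ℝ)) (R : ℝ × ℝ → Matrix (Fin 3) (Fin 3) ℝ) :
    ℝ × ℝ → (I6 → ℝ) :=
  fun pt => (C pt.1)⁻¹ *ᵥ Sum.elim (s1f p R pt) (s2f R Υc pt)

/-- First three components `z₁` of `z`. -/
noncomputable def z1f (C : ℝ → Matrix I6 I6 ℝ) (Υc : ℝ → (Fin 3 → ℝ))
    (p : ℝ × ℝ → (Fin 3 → ℝ)) (R : ℝ × ℝ → Matrix (Fin 3) (Fin 3) ℝ) :
    ℝ × ℝ → (Fin 3 → ℝ) :=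
  fun pt i => zf C Υc p R pt (Sum.inl i)

/-- Last three components `z₂` of `z`. -/
noncomputable def z2f (C : ℝ → Matrix I6 I6 ℝ) (Υc : ℝ → (Fin 3 → ℝ))
    (p : ℝ × ℝ → (Fin 3 → ℝ)) (R : ℝ × ℝ → Matrix (Fin 3) (Fin 3) ℝ) :
    ℝ × ℝ → (Fin 3 → ℝ) :=
  fun pt i => zf C Υc p R pt (Sum.inr i)

/-- Momenta `h = M v ∈ ℝ⁶`. -/
noncomputable def hf (M : ℝ → Matrix I6 I6 ℝ)
    (p : ℝ × ℝ → (Fin 3 → ℝ)) (R : ℝ × ℝ → Matrix (Fin 3) (Fin 3) ℝ) :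
    ℝ × ℝ → (I6 → ℝ) :=
  fun pt => M pt.1 *ᵥ vf p R pt

/-- First three components `h₁` of `h`. -/
noncomputable def h1f (M : ℝ → Matrix I6 I6 ℝ)
    (p : ℝ × ℝ → (Fin 3 → ℝ)) (R : ℝ × ℝ → Matrix (Fin 3) (Fin 3) ℝ) :
    ℝ × ℝ → (Fin 3 → ℝ) :=
  fun pt i => hf M p R pt (Sum.inl i)

/-- Last three components `h₂` of `h`. -/
noncomputable def h2f (M : ℝ → Matrix I6 I6 ℝ)
    (p : ℝ × ℝ → (Fin 3 → ℝ)) (R : ℝ × ℝ → Matrix (Fin 3) (Fin 3) ℝ) :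
    ℝ × ℝ → (Fin 3 → ℝ) :=
  fun pt i => hf M p R pt (Sum.inr i)

/-- `M ∂ₜ v ∈ ℝ⁶`. -/
noncomputable def Mdtv (M : ℝ → Matrix I6 I6 ℝ)
    (p : ℝ × ℝ → (Fin 3 → ℝ)) (R : ℝ × ℝ → Matrix (Fin 3) (Fin 3) ℝ) :
    ℝ × ℝ → (I6 → ℝ) :=
  fun pt => M pt.1 *ᵥ fderiv ℝ (vf p R) pt ((0 : ℝ), (1 : ℝ))

/-!
The matrix `Rᵀ ∂R` is skew because `Rᵀ R = 1`, hence `∂(R w) = R (ω × w + ∂w)` with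
`ω = vec (Rᵀ ∂R)`. Rotations commute with the cross product, so every term of the GEB system is
`R` applied to a vector in the body-attached basis, and cancelling the invertible matrix `R`
leaves the IGEB equations: `∂ₜ` contributes `ω = v₂`, `∂ₓ` contributes `ω = s₂ + Υ_c`, while
`Rᵀ ∂ₜp = v₁` and `Rᵀ ∂ₓp = s₁ + e₁`. Since `M` does not depend on `t`, `∂ₜh = M ∂ₜv`.
-/

open scoped Topology

section MatrixCalculus

variable {𝕜 : Type*} [NontriviallyNormedField 𝕜]
  {E : Type*} [NormedAddCommGroup E] [NormedSpace 𝕜 E]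
  {F : Type*} [NormedAddCommGroup F] [NormedSpace 𝕜 F]
  {l m n κ : Type*} {a : E}

lemma differentiableAt_reindex {w : E → n → 𝕜} (hw : DifferentiableAt 𝕜 w a) (σ : κ → n) :
    DifferentiableAt 𝕜 (fun q i => w q (σ i)) a :=
  differentiableAt_pi.2 fun i => differentiableAt_pi.1 hw (σ i)

lemma fderiv_reindex_apply {w : E → n → 𝕜} (hw : DifferentiableAt 𝕜 w a) (σ : κ → n) (d : E) :
    fderiv 𝕜 (fun q i => w q (σ i)) a d = fun i => fderiv 𝕜 w a d (σ i) := by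
  rw [fderiv_pi fun i => differentiableAt_pi.1 hw (σ i)]
  ext i
  simp only [ContinuousLinearMap.coe_pi', fderiv_apply hw, ContinuousLinearMap.comp_apply,
    ContinuousLinearMap.proj_apply]

lemma differentiableAt_sumElim {u : E → m → 𝕜} {w : E → n → 𝕜} (hu : DifferentiableAt 𝕜 u a)
    (hw : DifferentiableAt 𝕜 w a) : DifferentiableAt 𝕜 (fun q => Sum.elim (u q) (w q)) a :=
  differentiableAt_pi.2 <| Sum.rec (differentiableAt_pi.1 hu) (differentiableAt_pi.1 hw)

lemma differentiableAt_fderiv_apply {f : E → F} (hf : ContDiffAt 𝕜 2 f a) (d : E) :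
    DifferentiableAt 𝕜 (fun q => fderiv 𝕜 f q d) a :=
  ((hf.fderiv_right one_add_one_eq_two.le).differentiableAt one_ne_zero).clm_apply
    (differentiableAt_const d)

variable [CompleteSpace 𝕜]

lemma differentiableAt_transpose [Finite m] [Finite n] {A : E → Matrix m n 𝕜}
    (hA : DifferentiableAt 𝕜 A a) : DifferentiableAt 𝕜 (fun q => (A q)ᵀ) a := by
  have := Fintype.ofFinite m
  have := Fintype.ofFinite n
  let transposeL := (transposeLinearEquiv m n 𝕜 𝕜).toLinearMap.toContinuousLinearMap
  exact transposeL.differentiableAt.comp a hA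

lemma fderiv_transpose_apply [Finite m] [Finite n] {A : E → Matrix m n 𝕜}
    (hA : DifferentiableAt 𝕜 A a) (d : E) :
    fderiv 𝕜 (fun q => (A q)ᵀ) a d = (fderiv 𝕜 A a d)ᵀ := by
  have := Fintype.ofFinite m
  have := Fintype.ofFinite n
  let transposeL := (transposeLinearEquiv m n 𝕜 𝕜).toLinearMap.toContinuousLinearMap
  exact DFunLike.congr_fun (transposeL.hasFDerivAt.comp a hA.hasFDerivAt).fderiv d

lemma differentiableAt_matrixMul [Finite l] [Fintype m] [Finite n] {A : E → Matrix l m 𝕜}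
    {B : E → Matrix m n 𝕜} (hA : DifferentiableAt 𝕜 A a) (hB : DifferentiableAt 𝕜 B a) :
    DifferentiableAt 𝕜 (fun q => A q * B q) a := by
  have := Fintype.ofFinite l
  have := Fintype.ofFinite n
  let mulL := (mulLinearMap (l := l) (m := m) (n := n) (A := 𝕜) 𝕜).toContinuousBilinearMap
  exact (mulL.hasFDerivAt_of_bilinear hA.hasFDerivAt hB.hasFDerivAt).differentiableAt

lemma fderiv_matrixMul_apply [Finite l] [Fintype m] [Finite n] {A : E → Matrix l m 𝕜}
    {B : E → Matrix m n 𝕜} (hA : DifferentiableAt 𝕜 A a) (hB : DifferentiableAt 𝕜 B a) (d : E) :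
    fderiv 𝕜 (fun q => A q * B q) a d = A a * fderiv 𝕜 B a d + fderiv 𝕜 A a d * B a := by
  have := Fintype.ofFinite l
  have := Fintype.ofFinite n
  let mulL := (mulLinearMap (l := l) (m := m) (n := n) (A := 𝕜) 𝕜).toContinuousBilinearMap
  exact DFunLike.congr_fun (mulL.fderiv_of_bilinear hA hB) d

variable [Fintype n]

lemma differentiableAt_mulVec [Finite m] {A : E → Matrix m n 𝕜} {w : E → n → 𝕜}
    (hA : DifferentiableAt 𝕜 A a) (hw : DifferentiableAt 𝕜 w a) :
    DifferentiableAt 𝕜 (fun q => A q *ᵥ w q) a := by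
  have := Fintype.ofFinite m
  let mulVecL := (mulVecBilin (m := m) (n := n) (A := 𝕜) 𝕜 𝕜).toContinuousBilinearMap
  exact (mulVecL.hasFDerivAt_of_bilinear hA.hasFDerivAt hw.hasFDerivAt).differentiableAt

lemma fderiv_mulVec_apply [Finite m] {A : E → Matrix m n 𝕜} {w : E → n → 𝕜}
    (hA : DifferentiableAt 𝕜 A a) (hw : DifferentiableAt 𝕜 w a) (d : E) :
    fderiv 𝕜 (fun q => A q *ᵥ w q) a d = A a *ᵥ fderiv 𝕜 w a d + fderiv 𝕜 A a d *ᵥ w a := by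
  have := Fintype.ofFinite m
  let mulVecL := (mulVecBilin (m := m) (n := n) (A := 𝕜) 𝕜 𝕜).toContinuousBilinearMap
  exact DFunLike.congr_fun (mulVecL.fderiv_of_bilinear hA hw) d

lemma differentiableAt_transpose_mulVec_fderiv [Finite m] {A : E → Matrix n m 𝕜} {f : E → n → 𝕜}
    (hA : DifferentiableAt 𝕜 A a) (hf : ContDiffAt 𝕜 2 f a) (d : E) :
    DifferentiableAt 𝕜 (fun q => (A q)ᵀ *ᵥ fderiv 𝕜 f q d) a :=
  differentiableAt_mulVec (differentiableAt_transpose hA) (differentiableAt_fderiv_apply hf d)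

lemma differentiableAt_matrixInv [DecidableEq n] {A : E → Matrix n n 𝕜}
    (hA : DifferentiableAt 𝕜 A a) (h : IsUnit (A a)) :
    DifferentiableAt 𝕜 (fun q => (A q)⁻¹) a := by
  simp only [nonsing_inv_eq_ringInverse]
  -- The `ℓ^∞` operator norm makes matrices a normed algebra without changing their topology.
  let := Matrix.linftyOpNormedRing (n := n) (α := 𝕜)
  let := Matrix.linftyOpNormedAlgebra (R := 𝕜) (n := n) (α := 𝕜)
  have : @CompleteSpace (Matrix n n 𝕜) PseudoMetricSpace.toUniformSpace :=
    FiniteDimensional.complete 𝕜 _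
  exact (differentiableAt_inverse (𝕜 := 𝕜) (R := Matrix n n 𝕜) h).comp a hA

lemma fderiv_comp_fst_mulVec_apply [Finite m] {A : E → Matrix m n 𝕜} {w : E × F → n → 𝕜}
    {b : E × F} (hA : DifferentiableAt 𝕜 A b.1) (hw : DifferentiableAt 𝕜 w b) (d : F) :
    fderiv 𝕜 (fun q => A q.1 *ᵥ w q) b (0, d) = A b.1 *ᵥ fderiv 𝕜 w b (0, d) := by
  have := Fintype.ofFinite m
  have hA_fst : HasFDerivAt (fun q : E × F => A q.1)
      (fderiv 𝕜 A b.1 ∘L ContinuousLinearMap.fst 𝕜 E F) b :=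
    hA.hasFDerivAt.comp b hasFDerivAt_fst
  rw [fderiv_mulVec_apply hA_fst.differentiableAt hw, hA_fst.fderiv,
    ContinuousLinearMap.comp_apply, ContinuousLinearMap.coe_fst', map_zero, zero_mulVec, add_zero]

lemma transpose_mul_fderiv_skew [DecidableEq n] {R : E → Matrix n n 𝕜}
    (hR : DifferentiableAt 𝕜 R a) (horth : ∀ᶠ q in 𝓝 a, (R q)ᵀ * R q = 1) (d : E) :
    ((R a)ᵀ * fderiv 𝕜 R a d)ᵀ = -((R a)ᵀ * fderiv 𝕜 R a d) := by
  have hconst : fderiv 𝕜 (fun q => (R q)ᵀ * R q) a d = 0 := by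
    rw [Filter.EventuallyEq.fderiv_eq (f := fun _ => (1 : Matrix n n 𝕜)) horth, fderiv_fun_const,
      Pi.zero_apply, _root_.zero_apply]
  rw [fderiv_matrixMul_apply (differentiableAt_transpose hR) hR, fderiv_transpose_apply hR]
    at hconst
  rw [transpose_mul, transpose_transpose]
  exact eq_neg_of_add_eq_zero_right hconst

end MatrixCalculus

section Orthogonal

variable {n S : Type*} [Fintype n] [DecidableEq n] [CommRing S] {Q : Matrix n n S}

lemma mulVec_inj_of_orthogonal (hQ : Qᵀ * Q = 1) {u v : n → S} : Q *ᵥ u = Q *ᵥ v ↔ u = v :=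
  (mulVec_injective_of_isUnit (.of_mul_eq_one_right _ hQ)).eq_iff

lemma mulVec_transpose_mulVec (hQ : Qᵀ * Q = 1) (u : n → S) : Q *ᵥ (Qᵀ *ᵥ u) = u := by
  rw [mulVec_mulVec, mul_eq_one_comm.1 hQ, one_mulVec]

end Orthogonal

section CrossProduct

lemma cross_eq_crossProduct (u v : Fin 3 → ℝ) : cross u v = u ⨯₃ v :=
  (cross_apply u v).symm

lemma transpose_mulVec_crossProduct_mulVec {S : Type*} [CommRing S]
    (A : Matrix (Fin 3) (Fin 3) S) (u v : Fin 3 → S) :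
    Aᵀ *ᵥ ((A *ᵥ u) ⨯₃ (A *ᵥ v)) = A.det • (u ⨯₃ v) := by
  ext i
  fin_cases i <;>
    simp [cross_apply, mulVec, dotProduct, Fin.sum_univ_three, det_fin_three] <;> ring

lemma crossProduct_mulVec_mulVec {S : Type*} [CommRing S] {Q : Matrix (Fin 3) (Fin 3) S}
    (hQ : Qᵀ * Q = 1) (hdet : Q.det = 1) (u v : Fin 3 → S) :
    (Q *ᵥ u) ⨯₃ (Q *ᵥ v) = Q *ᵥ (u ⨯₃ v) := by
  rw [← one_smul S (u ⨯₃ v), ← hdet, ← transpose_mulVec_crossProduct_mulVec,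
    mulVec_transpose_mulVec hQ]

lemma mulVec_eq_vecOf_crossProduct {W : Matrix (Fin 3) (Fin 3) ℝ} (hW : Wᵀ = -W)
    (u : Fin 3 → ℝ) : W *ᵥ u = vecOf W ⨯₃ u := by
  have hskew (i j : Fin 3) : W i j = -W j i := congrFun₂ hW j i
  have hdiag (i : Fin 3) : W i i = 0 := self_eq_neg.1 (hskew i i)
  ext i
  fin_cases i <;>
    simp [vecOf, cross_apply, mulVec, dotProduct, Fin.sum_univ_three, hdiag, hskew 0 1,
      hskew 1 2, hskew 2 0] <;> ring

end CrossProduct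

section MovingFrame

variable {E : Type*} [NormedAddCommGroup E] [NormedSpace ℝ E] {a : E}

/-- The rate of rotation `vec (Rᵀ ∂_d R)` of a moving frame `R` in the direction `d`, expressed in
the body-attached basis: the angular velocity for `d = ∂ₜ`, the curvature for `d = ∂ₓ`. -/
noncomputable def frameRate (R : E → Matrix (Fin 3) (Fin 3) ℝ) (a d : E) : Fin 3 → ℝ :=
  vecOf ((R a)ᵀ * fderiv ℝ R a d)

lemma differentiableAt_frameRate {R : E → Matrix (Fin 3) (Fin 3) ℝ} (hR : ContDiffAt ℝ 2 R a)
    (d : E) : DifferentiableAt ℝ (frameRate R · d) a := by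
  have hW : DifferentiableAt ℝ (fun q => (R q)ᵀ * fderiv ℝ R q d) a :=
    differentiableAt_matrixMul
      (differentiableAt_transpose (hR.differentiableAt two_ne_zero))
      (differentiableAt_fderiv_apply hR d)
  have hentry (i j : Fin 3) := differentiableAt_pi.1 (differentiableAt_pi.1 hW i) j
  refine differentiableAt_pi.2 fun i => ?_
  fin_cases i
  exacts [hentry 2 1, hentry 0 2, hentry 1 0]

lemma fderiv_mulVec_of_orthogonal {R : E → Matrix (Fin 3) (Fin 3) ℝ} {w : E → Fin 3 → ℝ}
    (hR : DifferentiableAt ℝ R a) (horth : ∀ᶠ q in 𝓝 a, (R q)ᵀ * R q = 1)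
    (hw : DifferentiableAt ℝ w a) (d : E) :
    fderiv ℝ (fun q => R q *ᵥ w q) a d =
      R a *ᵥ (fderiv ℝ w a d + frameRate R a d ⨯₃ w a) := by
  rw [fderiv_mulVec_apply hR hw, frameRate,
    ← mulVec_eq_vecOf_crossProduct (transpose_mul_fderiv_skew hR horth d), mulVec_add,
    mulVec_mulVec, ← Matrix.mul_assoc, mul_eq_one_comm.1 horth.self_of_nhds, Matrix.one_mul]

theorem linear_balance_iff_body_balance {R : E → Matrix (Fin 3) (Fin 3) ℝ}
    {h z : E → Fin 3 → ℝ} (hR : DifferentiableAt ℝ R a)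
    (horth : ∀ᶠ q in 𝓝 a, (R q)ᵀ * R q = 1) (hh : DifferentiableAt ℝ h a)
    (hz : DifferentiableAt ℝ z a) (t x : E) (φ : Fin 3 → ℝ) :
    fderiv ℝ (fun q => R q *ᵥ h q) a t = fderiv ℝ (fun q => R q *ᵥ z q) a x + R a *ᵥ φ ↔
      fderiv ℝ h a t + frameRate R a t ⨯₃ h a =
        fderiv ℝ z a x + frameRate R a x ⨯₃ z a + φ := by
  rw [fderiv_mulVec_of_orthogonal hR horth hh, fderiv_mulVec_of_orthogonal hR horth hz,
    ← mulVec_add, mulVec_inj_of_orthogonal horth.self_of_nhds]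

theorem angular_balance_iff_body_balance {R : E → Matrix (Fin 3) (Fin 3) ℝ}
    {h z : E → Fin 3 → ℝ} (hR : DifferentiableAt ℝ R a)
    (horth : ∀ᶠ q in 𝓝 a, (R q)ᵀ * R q = 1) (hdet : (R a).det = 1)
    (hh : DifferentiableAt ℝ h a) (hz : DifferentiableAt ℝ z a) (t x : E)
    (pₜ pₓ η ζ ψ : Fin 3 → ℝ) :
    pₜ ⨯₃ (R a *ᵥ η) + fderiv ℝ (fun q => R q *ᵥ h q) a t =
        pₓ ⨯₃ (R a *ᵥ ζ) + fderiv ℝ (fun q => R q *ᵥ z q) a x + R a *ᵥ ψ ↔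
      ((R a)ᵀ *ᵥ pₜ) ⨯₃ η + (fderiv ℝ h a t + frameRate R a t ⨯₃ h a) =
        ((R a)ᵀ *ᵥ pₓ) ⨯₃ ζ + (fderiv ℝ z a x + frameRate R a x ⨯₃ z a) + ψ := by
  have hQ := horth.self_of_nhds
  have crossProduct_rotated (u v : Fin 3 → ℝ) :
      u ⨯₃ (R a *ᵥ v) = R a *ᵥ (((R a)ᵀ *ᵥ u) ⨯₃ v) := by
    rw [← crossProduct_mulVec_mulVec hQ hdet, mulVec_transpose_mulVec hQ]
  rw [fderiv_mulVec_of_orthogonal hR horth hh, fderiv_mulVec_of_orthogonal hR horth hz,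
    crossProduct_rotated, crossProduct_rotated]
  simp only [← mulVec_add, mulVec_inj_of_orthogonal hQ]

end MovingFrame

section Beam

variable {M C : ℝ → Matrix I6 I6 ℝ} {Υc : ℝ → Fin 3 → ℝ} {Φ Ψ : ℝ × ℝ → Fin 3 → ℝ}
  {p : ℝ × ℝ → Fin 3 → ℝ} {R : ℝ × ℝ → Matrix (Fin 3) (Fin 3) ℝ} {pt : ℝ × ℝ}

/-- The first six governing equations of the intrinsic geometrically exact beam model at the point
`pt = (x, t)`, for the intrinsic variables derived from `p` and `R`. -/
def SatisfiesIGEBAt (M C : ℝ → Matrix I6 I6 ℝ) (Υc : ℝ → Fin 3 → ℝ) (Φ Ψ : ℝ × ℝ → Fin 3 → ℝ)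
    (p : ℝ × ℝ → Fin 3 → ℝ) (R : ℝ × ℝ → Matrix (Fin 3) (Fin 3) ℝ) (pt : ℝ × ℝ) : Prop :=
  ((fun i => Mdtv M p R pt (Sum.inl i))
      - fderiv ℝ (z1f C Υc p R) pt (1, 0)
      - cross (Υc pt.1) (z1f C Υc p R pt)
      + cross (v2f R pt) (h1f M p R pt)
      + cross (z1f C Υc p R pt) (s2f R Υc pt) = Φ pt) ∧
  ((fun i => Mdtv M p R pt (Sum.inr i))
      - fderiv ℝ (z2f C Υc p R) pt (1, 0)
      - cross e1v (z1f C Υc p R pt)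
      - cross (Υc pt.1) (z2f C Υc p R pt)
      + cross (v1f p R pt) (h1f M p R pt)
      + cross (v2f R pt) (h2f M p R pt)
      + cross (z1f C Υc p R pt) (s1f p R pt)
      + cross (z2f C Υc p R pt) (s2f R Υc pt) = Ψ pt)

/-- The governing system of the geometrically exact beam model, i.e. the balance of linear and of
angular momentum, at the point `pt = (x, t)`. -/
def SatisfiesGEBAt (M C : ℝ → Matrix I6 I6 ℝ) (Υc : ℝ → Fin 3 → ℝ) (Φ Ψ : ℝ × ℝ → Fin 3 → ℝ)
    (p : ℝ × ℝ → Fin 3 → ℝ) (R : ℝ × ℝ → Matrix (Fin 3) (Fin 3) ℝ) (pt : ℝ × ℝ) : Prop :=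
  (fderiv ℝ (fun q => R q *ᵥ h1f M p R q) pt (0, 1)
    = fderiv ℝ (fun q => R q *ᵥ z1f C Υc p R q) pt (1, 0) + R pt *ᵥ Φ pt) ∧
  (cross (fderiv ℝ p pt (0, 1)) (R pt *ᵥ h1f M p R pt)
      + fderiv ℝ (fun q => R q *ᵥ h2f M p R q) pt (0, 1)
    = cross (fderiv ℝ p pt (1, 0)) (R pt *ᵥ z1f C Υc p R pt)
      + fderiv ℝ (fun q => R q *ᵥ z2f C Υc p R q) pt (1, 0)
      + R pt *ᵥ Ψ pt)

lemma v1f_apply : v1f p R pt = (R pt)ᵀ *ᵥ fderiv ℝ p pt (0, 1) :=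
  rfl

lemma v2f_eq_frameRate : v2f R pt = frameRate R pt (0, 1) :=
  rfl

lemma transpose_mulVec_fderiv_eq_s1f_add_e1v :
    (R pt)ᵀ *ᵥ fderiv ℝ p pt (1, 0) = s1f p R pt + e1v :=
  (sub_add_cancel _ _).symm

lemma frameRate_eq_s2f_add (Υc : ℝ → Fin 3 → ℝ) : frameRate R pt (1, 0) = s2f R Υc pt + Υc pt.1 :=
  (sub_add_cancel _ _).symm

lemma differentiableAt_vf (hp : ContDiffAt ℝ 2 p pt) (hR : ContDiffAt ℝ 2 R pt) :
    DifferentiableAt ℝ (vf p R) pt :=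
  differentiableAt_sumElim
    (differentiableAt_transpose_mulVec_fderiv (hR.differentiableAt two_ne_zero) hp _)
    (differentiableAt_frameRate hR _)

lemma differentiableAt_zf (hC : DifferentiableAt ℝ C pt.1) (hCunit : IsUnit (C pt.1))
    (hΥc : DifferentiableAt ℝ Υc pt.1) (hp : ContDiffAt ℝ 2 p pt) (hR : ContDiffAt ℝ 2 R pt) :
    DifferentiableAt ℝ (zf C Υc p R) pt := by
  have hs₁ : DifferentiableAt ℝ (s1f p R) pt :=
    (differentiableAt_transpose_mulVec_fderiv (hR.differentiableAt two_ne_zero) hp _).sub_const _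
  have hs₂ : DifferentiableAt ℝ (s2f R Υc) pt :=
    (differentiableAt_frameRate hR _).sub (hΥc.comp pt differentiableAt_fst)
  exact differentiableAt_mulVec
    (differentiableAt_matrixInv (hC.comp pt differentiableAt_fst) hCunit)
    (differentiableAt_sumElim hs₁ hs₂)

lemma differentiableAt_hf (hM : DifferentiableAt ℝ M pt.1) (hv : DifferentiableAt ℝ (vf p R) pt) :
    DifferentiableAt ℝ (hf M p R) pt :=
  differentiableAt_mulVec (hM.comp pt differentiableAt_fst) hv

lemma fderiv_h1f_time (hM : DifferentiableAt ℝ M pt.1) (hv : DifferentiableAt ℝ (vf p R) pt) :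
    fderiv ℝ (h1f M p R) pt (0, 1) = fun i => Mdtv M p R pt (Sum.inl i) :=
  (fderiv_reindex_apply (differentiableAt_hf hM hv) Sum.inl _).trans <|
    funext fun i => congrFun (fderiv_comp_fst_mulVec_apply hM hv 1) (Sum.inl i)

lemma fderiv_h2f_time (hM : DifferentiableAt ℝ M pt.1) (hv : DifferentiableAt ℝ (vf p R) pt) :
    fderiv ℝ (h2f M p R) pt (0, 1) = fun i => Mdtv M p R pt (Sum.inr i) :=
  (fderiv_reindex_apply (differentiableAt_hf hM hv) Sum.inr _).trans <|
    funext fun i => congrFun (fderiv_comp_fst_mulVec_apply hM hv 1) (Sum.inr i)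

theorem satisfiesIGEBAt_iff_satisfiesGEBAt (hM : DifferentiableAt ℝ M pt.1)
    (hv : DifferentiableAt ℝ (vf p R) pt) (hz : DifferentiableAt ℝ (zf C Υc p R) pt)
    (hR : DifferentiableAt ℝ R pt) (horth : ∀ᶠ q in 𝓝 pt, (R q)ᵀ * R q = 1)
    (hdet : (R pt).det = 1) :
    SatisfiesIGEBAt M C Υc Φ Ψ p R pt ↔ SatisfiesGEBAt M C Υc Φ Ψ p R pt := by
  have hh := differentiableAt_hf hM hv
  have hh₁ : DifferentiableAt ℝ (h1f M p R) pt := differentiableAt_reindex hh Sum.inl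
  have hh₂ : DifferentiableAt ℝ (h2f M p R) pt := differentiableAt_reindex hh Sum.inr
  have hz₁ : DifferentiableAt ℝ (z1f C Υc p R) pt := differentiableAt_reindex hz Sum.inl
  have hz₂ : DifferentiableAt ℝ (z2f C Υc p R) pt := differentiableAt_reindex hz Sum.inr
  simp only [SatisfiesIGEBAt, SatisfiesGEBAt, cross_eq_crossProduct]
  rw [linear_balance_iff_body_balance hR horth hh₁ hz₁,
    angular_balance_iff_body_balance hR horth hdet hh₂ hz₂, fderiv_h1f_time hM hv,
    fderiv_h2f_time hM hv, ← v1f_apply, ← v2f_eq_frameRate,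
    transpose_mulVec_fderiv_eq_s1f_add_e1v, frameRate_eq_s2f_add Υc,
    ← cross_anticomm (s1f p R pt), ← cross_anticomm (s2f R Υc pt),
    ← cross_anticomm (s2f R Υc pt)]
  simp only [map_add, LinearMap.add_apply]
  constructor <;> rintro ⟨hlin, hang⟩ <;> constructor
  · linear_combination (norm := abel) hlin
  · linear_combination (norm := abel) hang
  · linear_combination (norm := abel) hlin
  · linear_combination (norm := abel) hang

end Beam

theorem stmt_16_general {X I : Set ℝ} {M C : ℝ → Matrix I6 I6 ℝ} {Υc : ℝ → Fin 3 → ℝ}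
    {p : ℝ × ℝ → Fin 3 → ℝ} {R : ℝ × ℝ → Matrix (Fin 3) (Fin 3) ℝ}
    (hM : DifferentiableOn ℝ M X) (hC : DifferentiableOn ℝ C X) (hCunit : ∀ x ∈ X, IsUnit (C x))
    (hΥc : DifferentiableOn ℝ Υc X) (hp : ContDiffOn ℝ 2 p (X ×ˢ I))
    (hR : ContDiffOn ℝ 2 R (X ×ˢ I))
    (hSO : ∀ pt ∈ X ×ˢ I, (R pt)ᵀ * R pt = 1 ∧ (R pt).det = 1) (Φ Ψ : ℝ × ℝ → Fin 3 → ℝ) :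
    (∀ pt ∈ interior X ×ˢ interior I, SatisfiesIGEBAt M C Υc Φ Ψ p R pt) ↔
      ∀ pt ∈ interior X ×ˢ interior I, SatisfiesGEBAt M C Υc Φ Ψ p R pt := by
  refine forall₂_congr fun pt ⟨hx, ht⟩ => ?_
  have hX : X ∈ 𝓝 pt.1 := mem_interior_iff_mem_nhds.1 hx
  have hXI : X ×ˢ I ∈ 𝓝 pt := prod_mem_nhds hX (mem_interior_iff_mem_nhds.1 ht)
  have hp_at := hp.contDiffAt hXI
  have hR_at := hR.contDiffAt hXI
  refine satisfiesIGEBAt_iff_satisfiesGEBAt (hM.differentiableAt hX)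
    (differentiableAt_vf hp_at hR_at) ?_ (hR_at.differentiableAt two_ne_zero) ?_ ?_
  · exact differentiableAt_zf (hC.differentiableAt hX) (hCunit _ (mem_of_mem_nhds hX))
      (hΥc.differentiableAt hX) hp_at hR_at
  · filter_upwards [hXI] with q hq using (hSO q hq).1
  · exact (hSO pt (mem_of_mem_nhds hXI)).2

/-- Equivalence, under the transformation to intrinsic variables, between the first six
governing equations of the IGEB model and the governing system of the GEB model. -/
theorem stmt_16 (ℓ T : ℝ) (hℓ : 0 < ℓ) (hT : 0 < T)
    (M C : ℝ → Matrix I6 I6 ℝ)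
    (hM : ContDiffOn ℝ 1 M (Set.Icc 0 ℓ)) (hC : ContDiffOn ℝ 1 C (Set.Icc 0 ℓ))
    (hMpos : ∀ x ∈ Set.Icc (0 : ℝ) ℓ, (M x).PosDef)
    (hCpos : ∀ x ∈ Set.Icc (0 : ℝ) ℓ, (C x).PosDef)
    (Υc : ℝ → (Fin 3 → ℝ)) (hΥc : ContDiffOn ℝ 1 Υc (Set.Icc 0 ℓ))
    (Φ Ψ : ℝ × ℝ → (Fin 3 → ℝ))
    (hΦ : ContinuousOn Φ (Set.Icc 0 ℓ ×ˢ Set.Icc 0 T))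
    (hΨ : ContinuousOn Ψ (Set.Icc 0 ℓ ×ˢ Set.Icc 0 T))
    (p : ℝ × ℝ → (Fin 3 → ℝ)) (R : ℝ × ℝ → Matrix (Fin 3) (Fin 3) ℝ)
    (hp : ContDiffOn ℝ 2 p (Set.Icc 0 ℓ ×ˢ Set.Icc 0 T))
    (hR : ContDiffOn ℝ 2 R (Set.Icc 0 ℓ ×ˢ Set.Icc 0 T))
    (hSO : ∀ pt ∈ Set.Icc (0 : ℝ) ℓ ×ˢ Set.Icc (0 : ℝ) T,
      (R pt)ᵀ * R pt = 1 ∧ (R pt).det = 1) :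
    (∀ pt ∈ Set.Ioo (0 : ℝ) ℓ ×ˢ Set.Ioo (0 : ℝ) T,
        ((fun i => Mdtv M p R pt (Sum.inl i))
            - fderiv ℝ (z1f C Υc p R) pt ((1 : ℝ), (0 : ℝ))
            - cross (Υc pt.1) (z1f C Υc p R pt)
            + cross (v2f R pt) (h1f M p R pt)
            + cross (z1f C Υc p R pt) (s2f R Υc pt) = Φ pt) ∧
        ((fun i => Mdtv M p R pt (Sum.inr i))
            - fderiv ℝ (z2f C Υc p R) pt ((1 : ℝ), (0 : ℝ))
            - cross e1v (z1f C Υc p R pt)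
            - cross (Υc pt.1) (z2f C Υc p R pt)
            + cross (v1f p R pt) (h1f M p R pt)
            + cross (v2f R pt) (h2f M p R pt)
            + cross (z1f C Υc p R pt) (s1f p R pt)
            + cross (z2f C Υc p R pt) (s2f R Υc pt) = Ψ pt))
    ↔
    (∀ pt ∈ Set.Ioo (0 : ℝ) ℓ ×ˢ Set.Ioo (0 : ℝ) T,
        (fderiv ℝ (fun q => R q *ᵥ h1f M p R q) pt ((0 : ℝ), (1 : ℝ))
            = fderiv ℝ (fun q => R q *ᵥ z1f C Υc p R q) pt ((1 : ℝ), (0 : ℝ))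
              + R pt *ᵥ Φ pt) ∧
        (cross (fderiv ℝ p pt ((0 : ℝ), (1 : ℝ))) (R pt *ᵥ h1f M p R pt)
            + fderiv ℝ (fun q => R q *ᵥ h2f M p R q) pt ((0 : ℝ), (1 : ℝ))
          = cross (fderiv ℝ p pt ((1 : ℝ), (0 : ℝ))) (R pt *ᵥ z1f C Υc p R pt)
              + fderiv ℝ (fun q => R q *ᵥ z2f C Υc p R q) pt ((1 : ℝ), (0 : ℝ))
              + R pt *ᵥ Ψ pt)) := by
  simpa only [interior_Icc] using! stmt_16_general (hM.differentiableOn one_ne_zero)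
    (hC.differentiableOn one_ne_zero) (fun x hx => (hCpos x hx).isUnit)
    (hΥc.differentiableOn one_ne_zero) hp hR hSO Φ Ψ
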